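/- For Re(x) > 0, the identity J₁(x) + log 2 = 3𝓕₁(x) − 2𝓕₁(2x) − 𝓕₁(x/2) + ((1+x)/(2x))·log 2 holds, where J₁(x) := ∫₀^∞ dt/((1+e^{−t})(1+e^{xt})). -/

import Mathlib

open MeasureTheory Set

noncomputable def digammaC (x : ℂ) : ℂ := deriv Complex.Gamma x / Complex.Gamma x

/-- The Ramanujan period function `𝓕₁`. -/
noncomputable def F1 (x : ℂ) : ℂ :=
  (∑' n : ℕ, (digammaC ((n + 1) * x) - Complex.log ((n + 1) * x) + 1 / (2 * (n + 1) * x))) -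
    (1 / 2) * ((Real.eulerMascheroniConstant : ℂ) - Complex.log (2 * Real.pi / x))

/-- `J₁(x) = ∫₀^∞ dt / ((1+e^{-t})(1+e^{xt}))`. -/
noncomputable def J1 (x : ℂ) : ℂ :=
  ∫ t in Set.Ioi (0 : ℝ), 1 / ((1 + Complex.exp (-(t : ℂ))) * (1 + Complex.exp (x * t)))

/-!
Write `B(t) = 1 / (e ^ t - 1) - 1 / t + 1 / 2`. Binet's formula says that
`ψ(z) - log z + 1 / (2z) = -∫₀^∞ e ^ (-zt) B(t) dt` for `Re z > 0`. At positive reals it holds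
because the difference of the two sides is `1`-periodic (by Frullani's integral) and tends to `0` at
infinity; the identity theorem extends it to the half-plane.

Summing the geometric series over the arguments `nx` gives
`F1 x = -∫₀^∞ B(t) / (e ^ (xt) - 1) dt - (γ - log (2π / x)) / 2`, and since
`1 / (X + 1) = 1 / (X - 1) - 2 / (X ^ 2 - 1)`, the combination `F1 x - 2 F1 (2x)` is
`-∫₀^∞ B(t) / (e ^ (xt) + 1) dt` up to elementary terms. Replacing `x` by `x / 2` and substituting
`t ↦ 2t` turns the kernel `B(t)` into `2 B(2t)`, and `2 B(2t) - B(t) = 1 / 2 - 1 / (e ^ t + 1)`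
produces the integrand of `J1`.
-/

open Filter Topology
open scoped Complex

section LaplaceTransform

lemma norm_cexp_neg_mul_ofReal (z : ℂ) (t : ℝ) :
    ‖cexp (-(z * t))‖ = Real.exp (-(z.re * t)) := by
  simp [Complex.norm_exp]

lemma integrableOn_cexp_neg_mul {z : ℂ} (hz : 0 < z.re) :
    IntegrableOn (fun t : ℝ ↦ cexp (-(z * t))) (Ioi 0) := by
  simpa only [neg_mul] using integrableOn_exp_mul_complex_Ioi (a := -z) (by simpa using hz) 0

lemma integral_cexp_neg_mul {z : ℂ} (hz : 0 < z.re) :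
    ∫ t in Ioi (0 : ℝ), cexp (-(z * t)) = z⁻¹ := by
  simpa [div_eq_mul_inv] using integral_exp_mul_complex_Ioi (a := -z) (by simpa using hz) 0

lemma integrableOn_mul_exp_neg_mul {r : ℝ} (hr : 0 < r) :
    IntegrableOn (fun t ↦ t * Real.exp (-(r * t))) (Ioi 0) := by
  simpa using integrableOn_rpow_mul_exp_neg_mul_rpow (s := 1) (p := 1) (by norm_num) one_pos hr

lemma integral_mul_exp_neg_mul {r : ℝ} (hr : 0 < r) :
    ∫ t in Ioi (0 : ℝ), t * Real.exp (-(r * t)) = (r ^ 2)⁻¹ := by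
  have h := Real.integral_rpow_mul_exp_neg_mul_Ioi two_pos hr
  rw [show (2 : ℝ) - 1 = 1 by norm_num, Real.Gamma_two, mul_one, Real.rpow_two, one_div,
    inv_pow] at h
  simpa only [Real.rpow_one] using h

lemma mul_exp_neg_mul_le {δ : ℝ} (hδ : 0 < δ) (t : ℝ) : t * Real.exp (-(δ * t)) ≤ δ⁻¹ := by
  rw [Real.exp_neg, ← div_eq_mul_inv, div_le_iff₀ (Real.exp_pos _), ← div_eq_inv_mul,
    le_div_iff₀' hδ]
  linarith [Real.add_one_le_exp (δ * t)]

variable {E : Type*} [NormedAddCommGroup E] [NormedSpace ℂ E]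

lemma aestronglyMeasurable_cexp_neg_mul_smul {f : ℝ → E} {c : ℝ}
    (hf : IntegrableOn (fun t : ℝ ↦ cexp (-(c * t)) • f t) (Ioi 0)) :
    AEStronglyMeasurable f (volume.restrict (Ioi 0)) := by
  have h : f = fun t : ℝ ↦ cexp (c * t) • cexp (-(c * t)) • f t := by
    ext t; rw [smul_smul, ← Complex.exp_add, add_neg_cancel, Complex.exp_zero, one_smul]
  rw [h]
  exact AEStronglyMeasurable.smul (by fun_prop) hf.1

lemma integrableOn_cexp_neg_mul_smul_of_le {f : ℝ → E} {c : ℝ} {z : ℂ} (hcz : c ≤ z.re)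
    (hf : IntegrableOn (fun t : ℝ ↦ cexp (-(c * t)) • f t) (Ioi 0)) :
    IntegrableOn (fun t : ℝ ↦ cexp (-(z * t)) • f t) (Ioi 0) := by
  refine Integrable.mono hf (.smul (by fun_prop) (aestronglyMeasurable_cexp_neg_mul_smul hf)) ?_
  filter_upwards [ae_restrict_mem measurableSet_Ioi] with t (ht : 0 < t)
  rw [norm_smul, norm_smul, norm_cexp_neg_mul_ofReal, norm_cexp_neg_mul_ofReal, Complex.ofReal_re]
  gcongr

theorem differentiableAt_integral_cexp_neg_mul_smul {f : ℝ → E} {c : ℝ} {z : ℂ} (hcz : c < z.re)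
    (hf : IntegrableOn (fun t : ℝ ↦ cexp (-(c * t)) • f t) (Ioi 0)) :
    DifferentiableAt ℂ (fun w : ℂ ↦ ∫ t in Ioi (0 : ℝ), cexp (-(w * t)) • f t) z := by
  obtain ⟨d, hcd, hdz⟩ := exists_between hcz
  have hfm := aestronglyMeasurable_cexp_neg_mul_smul hf
  have hbound {t : ℝ} (ht : 0 < t) {w : ℂ} (hw : d < w.re) :
      ‖(cexp (-(w * t)) * -t) • f t‖ ≤ (d - c)⁻¹ * ‖cexp (-(c * t)) • f t‖ := by
    have hexp : Real.exp (-(w.re * t)) ≤ Real.exp (-((d - c) * t)) * Real.exp (-(c * t)) := by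
      rw [← Real.exp_add, ← neg_add, ← add_mul, sub_add_cancel]
      gcongr
    calc ‖(cexp (-(w * t)) * -t) • f t‖ = t * Real.exp (-(w.re * t)) * ‖f t‖ := by
          rw [norm_smul, norm_mul, norm_cexp_neg_mul_ofReal, norm_neg, Complex.norm_of_nonneg ht.le,
            mul_comm t]
      _ ≤ t * (Real.exp (-((d - c) * t)) * Real.exp (-(c * t))) * ‖f t‖ := by gcongr
      _ = t * Real.exp (-((d - c) * t)) * ‖cexp (-(c * t)) • f t‖ := by
          rw [norm_smul, norm_cexp_neg_mul_ofReal, Complex.ofReal_re]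
          ring
      _ ≤ (d - c)⁻¹ * ‖cexp (-(c * t)) • f t‖ := by
          gcongr
          exact mul_exp_neg_mul_le (sub_pos.mpr hcd) t
  refine (hasDerivAt_integral_of_dominated_loc_of_deriv_le (s := {w : ℂ | d < w.re})
    (F := fun (w : ℂ) (t : ℝ) ↦ cexp (-(w * t)) • f t)
    (F' := fun (w : ℂ) (t : ℝ) ↦ (cexp (-(w * t)) * -t) • f t)
    ((isOpen_lt continuous_const Complex.continuous_re).mem_nhds hdz)
    (.of_forall fun w ↦ .smul (by fun_prop) hfm) (integrableOn_cexp_neg_mul_smul_of_le hcz.le hf)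
    (.smul (by fun_prop) hfm) ?_ (hf.norm.const_mul (d - c)⁻¹) ?_).2.differentiableAt
  · filter_upwards [ae_restrict_mem measurableSet_Ioi] with t ht w hw using hbound ht hw
  · refine .of_forall fun t w _ ↦ ?_
    simpa using (((hasDerivAt_id w).mul_const (t : ℂ)).neg.cexp).smul_const (f t)

end LaplaceTransform

theorem eqOn_of_frequently_eq_ofReal {E : Type*} [NormedAddCommGroup E] [NormedSpace ℂ E]
    [CompleteSpace E] {f g : ℂ → E} {U : Set ℂ} {a : ℝ} (hU : IsOpen U) (hUc : IsPreconnected U)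
    (ha : (a : ℂ) ∈ U) (hf : DifferentiableOn ℂ f U) (hg : DifferentiableOn ℂ g U)
    (hfg : ∃ᶠ y : ℝ in 𝓝[≠] a, f y = g y) : EqOn f g U :=
  (hf.analyticOnNhd hU).eqOn_of_preconnected_of_frequently_eq (hg.analyticOnNhd hU) hUc ha
    ((Complex.ofRealCLM.hasDerivAt.tendsto_nhdsNE one_ne_zero).frequently hfg)

section BinetKernel

/-- The kernel `1 / (e ^ t - 1) - 1 / t + 1 / 2` of Binet's integral for the digamma function. -/
noncomputable def binetKernel (t : ℝ) : ℝ := (Real.exp t - 1)⁻¹ - t⁻¹ + 1 / 2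

@[fun_prop]
lemma measurable_binetKernel : Measurable binetKernel := by
  unfold binetKernel
  fun_prop

lemma exp_sub_one_pos {t : ℝ} (ht : 0 < t) : 0 < Real.exp t - 1 :=
  sub_pos.mpr (Real.one_lt_exp_iff.mpr ht)

lemma binetKernel_nonneg {t : ℝ} (ht : 0 < t) : 0 ≤ binetKernel t := by
  have hE := exp_sub_one_pos ht
  have hlog : 2 * (Real.exp t - 1) ≤ t * (Real.exp t + 1) := by
    have h := Real.le_log_one_add_of_nonneg hE.le
    rw [add_sub_cancel, Real.log_exp, div_le_iff₀ (by linarith)] at h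
    linarith
  have hB : binetKernel t =
      (t * (Real.exp t + 1) - 2 * (Real.exp t - 1)) / (2 * t * (Real.exp t - 1)) := by
    unfold binetKernel
    field_simp
    ring
  rw [hB]
  exact div_nonneg (sub_nonneg.mpr hlog) (by positivity)

lemma binetKernel_le {t : ℝ} (ht : 0 < t) : binetKernel t ≤ t / 4 := by
  have hE : t * (1 + t / 2) ≤ Real.exp t - 1 := by
    linarith [Real.quadratic_le_exp_of_nonneg ht.le]
  have hgap : t⁻¹ - 1 / 2 + t / 4 - (t * (1 + t / 2))⁻¹ = t ^ 2 / (4 * (2 + t)) := by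
    field_simp
    ring
  have hgap_nonneg : 0 ≤ t ^ 2 / (4 * (2 + t)) := by positivity
  have hinv := inv_anti₀ (by positivity) hE
  unfold binetKernel
  linarith

lemma norm_binetKernel_le {t : ℝ} (ht : 0 < t) : ‖(binetKernel t : ℂ)‖ ≤ t / 4 := by
  rw [Complex.norm_of_nonneg (binetKernel_nonneg ht)]
  exact binetKernel_le ht

lemma binetKernel_mul_one_sub_exp_neg {t : ℝ} (ht : 0 < t) :
    binetKernel t * (1 - Real.exp (-t)) =
      (1 + Real.exp (-t)) / 2 - t⁻¹ * (1 - Real.exp (-t)) := by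
  have hE := exp_sub_one_pos ht
  unfold binetKernel
  rw [Real.exp_neg]
  field_simp
  ring

lemma two_mul_binetKernel_two_mul_sub {t : ℝ} (ht : 0 < t) :
    2 * binetKernel (2 * t) - binetKernel t = 1 / 2 - (Real.exp t + 1)⁻¹ := by
  have hE := exp_sub_one_pos ht
  have hsq : Real.exp (2 * t) - 1 = (Real.exp t - 1) * (Real.exp t + 1) := by
    rw [two_mul, Real.exp_add]
    ring
  unfold binetKernel
  rw [hsq]
  field_simp
  ring

end BinetKernel

section BinetIntegral

/-- The Laplace transform of `binetKernel`, which is the integral in Binet's formula for the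
digamma function. -/
noncomputable def binetIntegral (z : ℂ) : ℂ :=
  ∫ t in Ioi (0 : ℝ), cexp (-(z * t)) * binetKernel t

lemma norm_cexp_neg_mul_binetKernel_le (z : ℂ) {t : ℝ} (ht : 0 < t) :
    ‖cexp (-(z * t)) * binetKernel t‖ ≤ 1 / 4 * (t * Real.exp (-(z.re * t))) := by
  rw [norm_mul, norm_cexp_neg_mul_ofReal]
  calc Real.exp (-(z.re * t)) * ‖(binetKernel t : ℂ)‖ ≤ Real.exp (-(z.re * t)) * (t / 4) := by
        gcongr
        exact norm_binetKernel_le ht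
    _ = 1 / 4 * (t * Real.exp (-(z.re * t))) := by ring

lemma integrableOn_cexp_neg_mul_binetKernel {z : ℂ} (hz : 0 < z.re) :
    IntegrableOn (fun t : ℝ ↦ cexp (-(z * t)) * binetKernel t) (Ioi 0) := by
  refine ((integrableOn_mul_exp_neg_mul hz).const_mul (1 / 4)).mono' (by fun_prop) ?_
  filter_upwards [ae_restrict_mem measurableSet_Ioi] with t ht
    using norm_cexp_neg_mul_binetKernel_le z ht

lemma integral_norm_cexp_neg_mul_binetKernel_le {z : ℂ} (hz : 0 < z.re) :
    ∫ t in Ioi (0 : ℝ), ‖cexp (-(z * t)) * binetKernel t‖ ≤ 1 / 4 * (z.re ^ 2)⁻¹ := by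
  rw [← integral_mul_exp_neg_mul hz, ← integral_const_mul]
  exact setIntegral_mono_on (integrableOn_cexp_neg_mul_binetKernel hz).norm
    ((integrableOn_mul_exp_neg_mul hz).const_mul (1 / 4)) measurableSet_Ioi
    fun t ht ↦ norm_cexp_neg_mul_binetKernel_le z ht

lemma norm_binetIntegral_le {z : ℂ} (hz : 0 < z.re) :
    ‖binetIntegral z‖ ≤ 1 / 4 * (z.re ^ 2)⁻¹ :=
  (norm_integral_le_integral_norm _).trans (integral_norm_cexp_neg_mul_binetKernel_le hz)

lemma differentiableAt_binetIntegral {z : ℂ} (hz : 0 < z.re) :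
    DifferentiableAt ℂ binetIntegral z := by
  have hz2 : 0 < ((z.re / 2 : ℝ) : ℂ).re := half_pos hz
  exact differentiableAt_integral_cexp_neg_mul_smul (half_lt_self hz)
    (integrableOn_cexp_neg_mul_binetKernel hz2)

lemma tendsto_binetIntegral_ofReal : Tendsto (fun y : ℝ ↦ binetIntegral y) atTop (𝓝 0) := by
  have hbound : Tendsto (fun y : ℝ ↦ 1 / 4 * (y ^ 2)⁻¹) atTop (𝓝 0) := by
    simpa using (tendsto_pow_neg_atTop two_ne_zero).const_mul (1 / 4 : ℝ)
  refine squeeze_zero_norm' ?_ hbound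
  filter_upwards [eventually_gt_atTop 0] with y hy using norm_binetIntegral_le (z := y) hy

lemma integral_inv_smul_cexp_neg_sub {a b : ℝ} (ha : 0 < a) (hb : 0 < b)
    (hint : IntegrableOn (fun t : ℝ ↦ t⁻¹ • (cexp (-(a * t)) - cexp (-(b * t)))) (Ioi 0)) :
    ∫ t in Ioi (0 : ℝ), t⁻¹ • (cexp (-(a * t)) - cexp (-(b * t))) = Real.log (b / a) := by
  have hcont : Continuous fun t : ℝ ↦ cexp (-t) := by fun_prop
  have hzero : Tendsto (fun t : ℝ ↦ cexp (-t)) (𝓝[>] 0) (𝓝 1) := by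
    simpa using (hcont.tendsto 0).mono_left nhdsWithin_le_nhds
  have htop : Tendsto (fun t : ℝ ↦ cexp (-t)) atTop (𝓝 0) := by
    simpa [Function.comp_def] using
      (Complex.continuous_ofReal.tendsto 0).comp Real.tendsto_exp_neg_atTop_nhds_zero
  have h := Frullani.integral_Ioi_eq (hcont.locallyIntegrable.locallyIntegrableOn _) ha hb
    hzero htop (by simpa using hint)
  simpa using h

lemma inv_smul_cexp_neg_sub_eq (z : ℂ) {t : ℝ} (ht : 0 < t) :
    t⁻¹ • (cexp (-(z * t)) - cexp (-((z + 1) * t))) =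
      1 / 2 * (cexp (-(z * t)) + cexp (-((z + 1) * t))) -
        (cexp (-(z * t)) * binetKernel t - cexp (-((z + 1) * t)) * binetKernel t) := by
  have hB := congrArg Complex.ofReal (binetKernel_mul_one_sub_exp_neg ht)
  have hexp : cexp (-((z + 1) * t)) = cexp (-(z * t)) * cexp (-t) := by
    rw [← Complex.exp_add]
    ring_nf
  push_cast at hB
  rw [hexp, Complex.real_smul]
  push_cast
  linear_combination cexp (-(z * t)) * hB

theorem binetIntegral_sub_binetIntegral_add_one {y : ℝ} (hy : 0 < y) :
    binetIntegral y - binetIntegral (y + 1) =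
      1 / 2 * ((y : ℂ)⁻¹ + (y + 1 : ℂ)⁻¹) - Real.log ((y + 1) / y) := by
  have hy0 : 0 < (y : ℂ).re := hy
  have hy1 : 0 < (y + 1 : ℂ).re := by simpa using hy.trans (lt_add_one y)
  have hexp : IntegrableOn
      (fun t : ℝ ↦ 1 / 2 * (cexp (-(y * t)) + cexp (-((y + 1) * t)))) (Ioi 0) :=
    ((integrableOn_cexp_neg_mul hy0).add (integrableOn_cexp_neg_mul hy1)).const_mul _
  have hker : IntegrableOn (fun t : ℝ ↦
      cexp (-(y * t)) * binetKernel t - cexp (-((y + 1) * t)) * binetKernel t) (Ioi 0) :=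
    (integrableOn_cexp_neg_mul_binetKernel hy0).sub (integrableOn_cexp_neg_mul_binetKernel hy1)
  have hfrullani := integral_inv_smul_cexp_neg_sub hy (hy.trans (lt_add_one y)) <| by
    push_cast
    exact IntegrableOn.congr_fun (hexp.sub hker)
      (fun t ht ↦ (inv_smul_cexp_neg_sub_eq y ht).symm) measurableSet_Ioi
  push_cast at hfrullani
  rw [setIntegral_congr_fun measurableSet_Ioi fun t ht ↦ inv_smul_cexp_neg_sub_eq y ht,
    integral_sub hexp hker, integral_const_mul,
    integral_add (integrableOn_cexp_neg_mul hy0) (integrableOn_cexp_neg_mul hy1),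
    integral_sub (integrableOn_cexp_neg_mul_binetKernel hy0)
      (integrableOn_cexp_neg_mul_binetKernel hy1),
    integral_cexp_neg_mul hy0, integral_cexp_neg_mul hy1] at hfrullani
  unfold binetIntegral
  linear_combination -hfrullani

end BinetIntegral

section Digamma

lemma ne_neg_natCast_of_re_pos {z : ℂ} (hz : 0 < z.re) (m : ℕ) : z ≠ -m := by
  rintro rfl
  simp only [Complex.neg_re, Complex.natCast_re, neg_pos] at hz
  exact hz.not_ge m.cast_nonneg

lemma differentiableAt_realGamma_of_pos {y : ℝ} (hy : 0 < y) : DifferentiableAt ℝ Real.Gamma y :=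
  Real.differentiableOn_Gamma_Ioi.differentiableAt (Ioi_mem_nhds hy)

lemma digamma_ofReal {y : ℝ} (hy : 0 < y) :
    Complex.digamma y = (logDeriv Real.Gamma y : ℝ) := by
  have hcomplex : HasDerivAt (fun s : ℝ ↦ Complex.Gamma s) (deriv Complex.Gamma y) y :=
    (Complex.differentiableAt_Gamma y (ne_neg_natCast_of_re_pos hy)).hasDerivAt.comp_ofReal
  simp only [Complex.Gamma_ofReal] at hcomplex
  have hderiv := hcomplex.unique (differentiableAt_realGamma_of_pos hy).hasDerivAt.ofReal_comp
  rw [Complex.digamma_def, logDeriv_apply, logDeriv_apply, hderiv, Complex.Gamma_ofReal,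
    Complex.ofReal_div]

lemma differentiableAt_log_comp_Gamma {y : ℝ} (hy : 0 < y) :
    DifferentiableAt ℝ (Real.log ∘ Real.Gamma) y :=
  (differentiableAt_realGamma_of_pos hy).log (Real.Gamma_pos_of_pos hy).ne'

lemma deriv_log_comp_Gamma {y : ℝ} (hy : 0 < y) :
    deriv (Real.log ∘ Real.Gamma) y = logDeriv Real.Gamma y :=
  Real.deriv_log_comp_eq_logDeriv (differentiableAt_realGamma_of_pos hy)
    (Real.Gamma_pos_of_pos hy).ne'

lemma slope_log_comp_Gamma {y : ℝ} (hy : 0 < y) :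
    slope (Real.log ∘ Real.Gamma) y (y + 1) = Real.log y := by
  rw [slope_def_field, Function.comp_apply, Function.comp_apply, Real.Gamma_add_one hy.ne',
    Real.log_mul hy.ne' (Real.Gamma_pos_of_pos hy).ne', add_sub_cancel_right, add_sub_cancel_left,
    div_one]

lemma logDeriv_Gamma_le_log {y : ℝ} (hy : 0 < y) : logDeriv Real.Gamma y ≤ Real.log y := by
  rw [← deriv_log_comp_Gamma hy, ← slope_log_comp_Gamma hy]
  exact Real.convexOn_log_Gamma.deriv_le_slope hy (add_pos hy one_pos) (lt_add_one y)
    (differentiableAt_log_comp_Gamma hy)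

lemma log_le_logDeriv_Gamma_add_one {y : ℝ} (hy : 0 < y) :
    Real.log y ≤ logDeriv Real.Gamma (y + 1) := by
  have hy1 := add_pos hy one_pos
  rw [← deriv_log_comp_Gamma hy1, ← slope_log_comp_Gamma hy]
  exact Real.convexOn_log_Gamma.slope_le_deriv hy hy1 (lt_add_one y)
    (differentiableAt_log_comp_Gamma hy1)

lemma norm_digamma_sub_log_le {y : ℝ} (hy : 0 < y) :
    ‖Complex.digamma y - Complex.log y‖ ≤ y⁻¹ := by
  have hrec : logDeriv Real.Gamma (y + 1) = logDeriv Real.Gamma y + y⁻¹ := by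
    have h := Complex.digamma_apply_add_one y (ne_neg_natCast_of_re_pos hy)
    rw [← Complex.ofReal_one, ← Complex.ofReal_add, digamma_ofReal hy,
      digamma_ofReal (add_pos hy one_pos)] at h
    exact_mod_cast h
  have hupper := logDeriv_Gamma_le_log hy
  have hlower := log_le_logDeriv_Gamma_add_one hy
  rw [digamma_ofReal hy, ← Complex.ofReal_log hy.le, ← Complex.ofReal_sub, Complex.norm_real,
    Real.norm_eq_abs, abs_le]
  have hinv := inv_pos.mpr hy
  constructor <;> linarith

lemma differentiableAt_digamma {z : ℂ} (hz : 0 < z.re) : DifferentiableAt ℂ Complex.digamma z := by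
  have hG : DifferentiableOn ℂ Complex.Gamma {w : ℂ | 0 < w.re} := fun w hw ↦
    (Complex.differentiableAt_Gamma w (ne_neg_natCast_of_re_pos hw)).differentiableWithinAt
  have hopen : IsOpen {w : ℂ | 0 < w.re} := isOpen_lt continuous_const Complex.continuous_re
  exact ((hG.deriv hopen).differentiableAt (hopen.mem_nhds hz)).div
    (hG.differentiableAt (hopen.mem_nhds hz)) (Complex.Gamma_ne_zero_of_re_pos hz)

/-- The remainder `ψ(z) - log z + 1 / (2z)` in the asymptotic expansion of the digamma function,
that is, the summand of `F1`. -/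
noncomputable def digammaRemainder (z : ℂ) : ℂ :=
  Complex.digamma z - Complex.log z + 1 / (2 * z)

lemma differentiableAt_digammaRemainder {z : ℂ} (hz : 0 < z.re) :
    DifferentiableAt ℂ digammaRemainder z := by
  have hz0 : z ≠ 0 := Complex.ne_zero_of_re_pos hz
  exact ((differentiableAt_digamma hz).sub (Complex.differentiableAt_log (.inl hz))).add
    (.div (by fun_prop) (by fun_prop) (mul_ne_zero two_ne_zero hz0))

lemma digammaRemainder_sub_digammaRemainder_add_one {y : ℝ} (hy : 0 < y) :
    digammaRemainder y - digammaRemainder (y + 1) =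
      Real.log ((y + 1) / y) - 1 / 2 * ((y : ℂ)⁻¹ + (y + 1 : ℂ)⁻¹) := by
  have hy1 := add_pos hy one_pos
  have hlog : Complex.log (y + 1) = Real.log (y + 1) := by
    rw [Complex.ofReal_log hy1.le, Complex.ofReal_add, Complex.ofReal_one]
  unfold digammaRemainder
  rw [Complex.digamma_apply_add_one y (ne_neg_natCast_of_re_pos hy), hlog,
    ← Complex.ofReal_log hy.le, Real.log_div hy1.ne' hy.ne']
  push_cast
  simp only [one_div, mul_inv]
  ring

lemma tendsto_digammaRemainder_ofReal :
    Tendsto (fun y : ℝ ↦ digammaRemainder y) atTop (𝓝 0) := by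
  have hdigamma : Tendsto (fun y : ℝ ↦ Complex.digamma y - Complex.log y) atTop (𝓝 0) := by
    refine squeeze_zero_norm' ?_ tendsto_inv_atTop_zero
    filter_upwards [eventually_gt_atTop 0] with y hy using norm_digamma_sub_log_le hy
  have hinv : Tendsto (fun y : ℝ ↦ 1 / (2 * (y : ℂ))) atTop (𝓝 0) := by
    have h : Tendsto (fun y : ℝ ↦ 2⁻¹ * y⁻¹) atTop (𝓝 0) := by
      simpa using tendsto_inv_atTop_zero.const_mul (2⁻¹ : ℝ)
    simpa [Function.comp_def, mul_comm] using (Complex.continuous_ofReal.tendsto 0).comp h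
  simpa only [digammaRemainder, add_zero] using hdigamma.add hinv

lemma eq_of_forall_add_one_eq_of_tendsto {E : Type*} [TopologicalSpace E] [T2Space E]
    {f : ℝ → E} {l : E} (hf : ∀ y, 0 < y → f (y + 1) = f y) (hl : Tendsto f atTop (𝓝 l))
    {y : ℝ} (hy : 0 < y) : f y = l := by
  have hshift (n : ℕ) : f (y + n) = f y := by
    induction n with
    | zero => rw [Nat.cast_zero, add_zero]
    | succ n ih => rw [Nat.cast_succ, ← add_assoc, hf _ (by positivity), ih]
  have hlim := hl.comp (tendsto_atTop_add_const_left _ y tendsto_natCast_atTop_atTop)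
  simp only [Function.comp_def, hshift] at hlim
  exact tendsto_const_nhds_iff.mp hlim

lemma digammaRemainder_ofReal {y : ℝ} (hy : 0 < y) :
    digammaRemainder y = -binetIntegral y := by
  have hlim : Tendsto (fun y : ℝ ↦ digammaRemainder y + binetIntegral y) atTop (𝓝 0) := by
    simpa only [add_zero] using tendsto_digammaRemainder_ofReal.add tendsto_binetIntegral_ofReal
  refine eq_neg_of_add_eq_zero_left (eq_of_forall_add_one_eq_of_tendsto (fun y hy ↦ ?_) hlim hy)
  push_cast
  linear_combination -digammaRemainder_sub_digammaRemainder_add_one hy -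
    binetIntegral_sub_binetIntegral_add_one hy

theorem digammaRemainder_eq_neg_binetIntegral {z : ℂ} (hz : 0 < z.re) :
    digammaRemainder z = -binetIntegral z := by
  refine eqOn_of_frequently_eq_ofReal (U := {w : ℂ | 0 < w.re}) (a := 1)
    (g := fun w ↦ -binetIntegral w)
    (isOpen_lt continuous_const Complex.continuous_re) (convex_halfSpace_re_gt 0).isPreconnected
    (by simp) (fun w hw ↦ (differentiableAt_digammaRemainder hw).differentiableWithinAt)
    (fun w hw ↦ (differentiableAt_binetIntegral hw).neg.differentiableWithinAt) ?_ hz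
  have hpos : ∀ᶠ y : ℝ in 𝓝[≠] 1, 0 < y := nhdsWithin_le_nhds (eventually_gt_nhds one_pos)
  exact (hpos.mono fun y hy ↦ digammaRemainder_ofReal hy).frequently

end Digamma

section LambertIntegral

lemma one_lt_norm_cexp {z : ℂ} (hz : 0 < z.re) : 1 < ‖cexp z‖ := by
  rwa [Complex.norm_exp, Real.one_lt_exp_iff]

lemma cexp_sub_one_ne_zero {z : ℂ} (hz : 0 < z.re) : cexp z - 1 ≠ 0 := fun h ↦
  (one_lt_norm_cexp hz).ne' (by rw [sub_eq_zero.mp h, norm_one])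

lemma cexp_add_one_ne_zero {z : ℂ} (hz : 0 < z.re) : cexp z + 1 ≠ 0 := fun h ↦
  (one_lt_norm_cexp hz).ne' (by rw [eq_neg_of_add_eq_zero_left h, norm_neg, norm_one])

lemma re_mul_ofReal_pos {x : ℂ} (hx : 0 < x.re) {t : ℝ} (ht : 0 < t) : 0 < (x * t).re := by
  rw [Complex.re_mul_ofReal]
  exact mul_pos hx ht

lemma hasSum_cexp_neg_succ_mul {z : ℂ} (hz : 0 < z.re) :
    HasSum (fun n : ℕ ↦ cexp (-((n + 1) * z))) (cexp z - 1)⁻¹ := by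
  have hq : ‖cexp (-z)‖ < 1 := by
    rw [Complex.exp_neg, norm_inv]
    exact inv_lt_one_of_one_lt₀ (one_lt_norm_cexp hz)
  have hterm (n : ℕ) : cexp (-((n + 1) * z)) = cexp (-z) * cexp (-z) ^ n := by
    rw [← Complex.exp_nat_mul, ← Complex.exp_add]
    ring_nf
  have hval : (cexp z - 1)⁻¹ = cexp (-z) * (1 - cexp (-z))⁻¹ := by
    rw [Complex.exp_neg, ← mul_inv, mul_sub, mul_inv_cancel₀ (Complex.exp_ne_zero z), mul_one]
  simp only [hterm, hval]
  exact (hasSum_geometric_of_norm_lt_one hq).mul_left _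

lemma norm_inv_cexp_sub_one_le {z : ℂ} (hz : 0 < z.re) :
    ‖(cexp z - 1)⁻¹‖ ≤ z.re⁻¹ * Real.exp (-(z.re / 2)) := by
  have hsinh : z.re * Real.exp (z.re / 2) ≤ Real.exp z.re - 1 := by
    have h := Real.self_le_sinh_iff.mpr (half_pos hz).le
    have hsq : Real.exp z.re = Real.exp (z.re / 2) * Real.exp (z.re / 2) := by
      rw [← Real.exp_add, add_halves]
    rw [Real.sinh_eq, div_le_div_iff_of_pos_right two_pos, Real.exp_neg] at h
    rw [hsq]
    calc z.re * Real.exp (z.re / 2)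
        ≤ (Real.exp (z.re / 2) - (Real.exp (z.re / 2))⁻¹) * Real.exp (z.re / 2) := by gcongr
      _ = Real.exp (z.re / 2) * Real.exp (z.re / 2) - 1 := by
          rw [sub_mul, inv_mul_cancel₀ (Real.exp_ne_zero _)]
  have hnorm : Real.exp z.re - 1 ≤ ‖cexp z - 1‖ := by
    simpa only [Complex.norm_exp, norm_one] using norm_sub_norm_le (cexp z) 1
  rw [norm_inv, Real.exp_neg, ← mul_inv]
  exact inv_anti₀ (by positivity) (hsinh.trans hnorm)

/-- The integral `∫₀^∞ B(t) / (e ^ (xt) - 1) dt`, where `B` is `binetKernel`; it is the sum of the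
Binet integrals over the positive integer multiples of `x`. -/
noncomputable def lambertIntegral (x : ℂ) : ℂ :=
  ∫ t in Ioi (0 : ℝ), binetKernel t * (cexp (x * t) - 1)⁻¹

lemma integrableOn_binetKernel_mul_inv_cexp_sub_one {x : ℂ} (hx : 0 < x.re) :
    IntegrableOn (fun t : ℝ ↦ binetKernel t * (cexp (x * t) - 1)⁻¹) (Ioi 0) := by
  refine ((integrableOn_exp_mul_Ioi (neg_lt_zero.mpr (half_pos hx)) 0).const_mul
    (1 / 4 * x.re⁻¹)).mono' (Measurable.aestronglyMeasurable (by fun_prop)) ?_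
  filter_upwards [ae_restrict_mem measurableSet_Ioi] with t (ht : 0 < t)
  have hinv := norm_inv_cexp_sub_one_le (re_mul_ofReal_pos hx ht)
  rw [Complex.re_mul_ofReal] at hinv
  calc ‖(binetKernel t : ℂ) * (cexp (x * t) - 1)⁻¹‖
      ≤ t / 4 * ((x.re * t)⁻¹ * Real.exp (-(x.re * t / 2))) := by
        rw [norm_mul]
        gcongr
        exact norm_binetKernel_le ht
    _ = 1 / 4 * x.re⁻¹ * Real.exp (-(x.re / 2) * t) := by
        field_simp

lemma hasSum_binetIntegral_succ_mul {x : ℂ} (hx : 0 < x.re) :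
    HasSum (fun n : ℕ ↦ binetIntegral ((n + 1) * x)) (lambertIntegral x) := by
  have hre (n : ℕ) : ((n + 1) * x).re = (n + 1) * x.re := by simp
  have hpos (n : ℕ) : 0 < ((n + 1) * x).re := by rw [hre]; positivity
  have hsummable : Summable fun n : ℕ ↦
      ∫ t in Ioi (0 : ℝ), ‖cexp (-((n + 1) * x * t)) * binetKernel t‖ := by
    have hbound : Summable fun n : ℕ ↦ 1 / 4 * (((n + 1) * x).re ^ 2)⁻¹ := by
      have h := (summable_nat_add_iff 1).mpr (Real.summable_nat_pow_inv.mpr one_lt_two)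
      refine (h.mul_left (1 / 4 * (x.re ^ 2)⁻¹)).congr fun n ↦ ?_
      rw [hre, mul_pow, mul_inv]
      push_cast
      ring
    exact hbound.of_nonneg_of_le (fun n ↦ integral_nonneg fun t ↦ norm_nonneg _)
      fun n ↦ integral_norm_cexp_neg_mul_binetKernel_le (hpos n)
  have hsum := hasSum_integral_of_summable_integral_norm
    (fun n ↦ integrableOn_cexp_neg_mul_binetKernel (hpos n)) hsummable
  rwa [setIntegral_congr_fun measurableSet_Ioi (g := fun t : ℝ ↦
    binetKernel t * (cexp (x * t) - 1)⁻¹) fun t ht ↦ ?_] at hsum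
  have h := (hasSum_cexp_neg_succ_mul (re_mul_ofReal_pos hx ht)).mul_right (binetKernel t : ℂ)
  simpa only [mul_assoc, mul_comm (binetKernel t : ℂ)] using h.tsum_eq

theorem F1_eq_neg_lambertIntegral_sub {x : ℂ} (hx : 0 < x.re) :
    F1 x = -lambertIntegral x -
      1 / 2 * (Real.eulerMascheroniConstant - Complex.log (2 * Real.pi / x)) := by
  have hpos (n : ℕ) : 0 < ((n + 1) * x).re := by
    simpa using mul_pos n.cast_add_one_pos hx
  have hterm (n : ℕ) : digammaC ((n + 1) * x) - Complex.log ((n + 1) * x) + 1 / (2 * (n + 1) * x) =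
      -binetIntegral ((n + 1) * x) := by
    have hdigamma : digammaC = Complex.digamma := rfl
    rw [← digammaRemainder_eq_neg_binetIntegral (hpos n), digammaRemainder, hdigamma, mul_assoc 2]
  unfold F1
  rw [tsum_congr hterm, (hasSum_binetIntegral_succ_mul hx).neg.tsum_eq]

end LambertIntegral

section AlternatingLambertIntegral

lemma inv_cexp_add_one_eq {z : ℂ} (hz : 0 < z.re) :
    (cexp z + 1)⁻¹ = (cexp z - 1)⁻¹ - 2 * (cexp (2 * z) - 1)⁻¹ := by
  have hsub := cexp_sub_one_ne_zero hz
  have hadd := cexp_add_one_ne_zero hz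
  have hsq : cexp (2 * z) - 1 = (cexp z - 1) * (cexp z + 1) := by
    rw [two_mul, Complex.exp_add]
    ring
  rw [hsq]
  field_simp
  ring

/-- The integral `∫₀^∞ B(t) / (e ^ (xt) + 1) dt`, where `B` is `binetKernel`: the analogue of
`lambertIntegral` whose geometric expansion alternates in sign. -/
noncomputable def altLambertIntegral (x : ℂ) : ℂ :=
  ∫ t in Ioi (0 : ℝ), binetKernel t * (cexp (x * t) + 1)⁻¹

lemma binetKernel_mul_inv_cexp_add_one_eq {x : ℂ} (hx : 0 < x.re) {t : ℝ} (ht : 0 < t) :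
    binetKernel t * (cexp (x * t) + 1)⁻¹ =
      binetKernel t * (cexp (x * t) - 1)⁻¹ -
        2 * (binetKernel t * (cexp (2 * x * t) - 1)⁻¹) := by
  rw [inv_cexp_add_one_eq (re_mul_ofReal_pos hx ht), mul_assoc 2 x]
  ring

lemma re_two_mul_pos {x : ℂ} (hx : 0 < x.re) : 0 < (2 * x).re := by
  simpa using hx

lemma integrableOn_binetKernel_mul_inv_cexp_add_one {x : ℂ} (hx : 0 < x.re) :
    IntegrableOn (fun t : ℝ ↦ binetKernel t * (cexp (x * t) + 1)⁻¹) (Ioi 0) :=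
  ((integrableOn_binetKernel_mul_inv_cexp_sub_one hx).sub
    ((integrableOn_binetKernel_mul_inv_cexp_sub_one (re_two_mul_pos hx)).const_mul 2)).congr_fun
      (fun _ ht ↦ (binetKernel_mul_inv_cexp_add_one_eq hx ht).symm) measurableSet_Ioi

theorem altLambertIntegral_eq {x : ℂ} (hx : 0 < x.re) :
    altLambertIntegral x = lambertIntegral x - 2 * lambertIntegral (2 * x) := by
  rw [altLambertIntegral, setIntegral_congr_fun measurableSet_Ioi fun t ht ↦
      binetKernel_mul_inv_cexp_add_one_eq hx ht,
    integral_sub (integrableOn_binetKernel_mul_inv_cexp_sub_one hx)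
      ((integrableOn_binetKernel_mul_inv_cexp_sub_one (re_two_mul_pos hx)).const_mul 2),
    integral_const_mul]
  rfl

lemma half_mul_ofReal_two_mul (x : ℂ) (t : ℝ) : x / 2 * (2 * t : ℝ) = x * t := by
  rw [Complex.ofReal_mul, Complex.ofReal_ofNat, ← mul_assoc, div_mul_cancel₀ x two_ne_zero]

lemma integrableOn_binetKernel_two_mul_mul_inv_cexp_add_one {x : ℂ} (hx : 0 < x.re) :
    IntegrableOn (fun t : ℝ ↦ binetKernel (2 * t) * (cexp (x * t) + 1)⁻¹) (Ioi 0) := by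
  have hx2 : 0 < (x / 2).re := by simpa using hx
  have h := (integrableOn_Ioi_comp_mul_left_iff _ 0 two_pos).mpr
    (by simpa only [mul_zero] using integrableOn_binetKernel_mul_inv_cexp_add_one hx2)
  simpa only [half_mul_ofReal_two_mul] using h

lemma altLambertIntegral_half (x : ℂ) :
    altLambertIntegral (x / 2) =
      2 * ∫ t in Ioi (0 : ℝ), binetKernel (2 * t) * (cexp (x * t) + 1)⁻¹ := by
  have h := integral_comp_mul_left_Ioi
    (fun t : ℝ ↦ binetKernel t * (cexp (x / 2 * t) + 1)⁻¹) 0 two_pos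
  simp only [half_mul_ofReal_two_mul, mul_zero] at h
  rw [h, Complex.real_smul, altLambertIntegral]
  push_cast
  rw [mul_inv_cancel_left₀ two_ne_zero]

lemma log_two_pi_div_two_mul {x : ℂ} (hx : x ≠ 0) :
    Complex.log (2 * Real.pi / (2 * x)) = Complex.log (2 * Real.pi / x) - Real.log 2 := by
  have hpi : (2 * Real.pi : ℂ) ≠ 0 := mul_ne_zero two_ne_zero (by exact_mod_cast Real.pi_ne_zero)
  have hsplit : (2 * Real.pi : ℂ) / (2 * x) = (2⁻¹ : ℝ) * (2 * Real.pi / x) := by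
    push_cast
    field_simp
  rw [hsplit, Complex.log_ofReal_mul (by norm_num) (div_ne_zero hpi hx), Real.log_inv,
    Complex.ofReal_neg, neg_add_eq_sub]

theorem F1_sub_two_mul_F1_two_mul {x : ℂ} (hx : 0 < x.re) :
    F1 x - 2 * F1 (2 * x) =
      1 / 2 * (Real.eulerMascheroniConstant - Complex.log (2 * Real.pi / x)) + Real.log 2 -
        altLambertIntegral x := by
  rw [F1_eq_neg_lambertIntegral_sub hx, F1_eq_neg_lambertIntegral_sub (re_two_mul_pos hx),
    log_two_pi_div_two_mul (Complex.ne_zero_of_re_pos hx), altLambertIntegral_eq hx]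
  ring

end AlternatingLambertIntegral

section FermiIntegral

lemma inv_cexp_add_one_eq_cexp_neg_mul (z : ℂ) :
    (cexp z + 1)⁻¹ = cexp (-z) * (1 + cexp (-z))⁻¹ := by
  rw [Complex.exp_neg, ← mul_inv, mul_add, mul_one, mul_inv_cancel₀ (Complex.exp_ne_zero z)]

lemma tendsto_cexp_neg_mul_atTop {x : ℂ} (hx : 0 < x.re) :
    Tendsto (fun t : ℝ ↦ cexp (-(x * t))) atTop (𝓝 0) := by
  simpa [Complex.tendsto_exp_nhds_zero_iff] using tendsto_id.const_mul_atTop hx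

lemma isBigO_inv_cexp_add_one {x : ℂ} (hx : 0 < x.re) :
    (fun t : ℝ ↦ (cexp (x * t) + 1)⁻¹) =O[atTop] fun t ↦ cexp (-(x * t)) := by
  have hlim : Tendsto (fun t : ℝ ↦ (1 + cexp (-(x * t)))⁻¹) atTop (𝓝 (1 + 0)⁻¹) :=
    ((tendsto_cexp_neg_mul_atTop hx).const_add 1).inv₀ (by simp)
  simp only [inv_cexp_add_one_eq_cexp_neg_mul]
  simpa only [mul_one] using (Asymptotics.isBigO_refl _ _).mul (hlim.isBigO_one ℂ)

lemma integrableOn_inv_cexp_add_one {x : ℂ} (hx : 0 < x.re) :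
    IntegrableOn (fun t : ℝ ↦ (cexp (x * t) + 1)⁻¹) (Ioi 0) := by
  have hcont : ContinuousOn (fun t : ℝ ↦ (cexp (x * t) + 1)⁻¹) (Ici 0) := by
    refine ContinuousOn.inv₀ (by fun_prop) fun t ht ↦ ?_
    rcases (mem_Ici.mp ht).eq_or_lt with rfl | ht
    · norm_num
    · exact cexp_add_one_ne_zero (re_mul_ofReal_pos hx ht)
  exact ((hcont.locallyIntegrableOn measurableSet_Ici).integrableOn_of_isBigO_atTop
    (isBigO_inv_cexp_add_one hx)
    ⟨Ioi 0, Ioi_mem_atTop 0, integrableOn_cexp_neg_mul hx⟩).mono_set Ioi_subset_Ici_self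

lemma hasDerivAt_log_one_add_cexp_neg_mul {x : ℂ} (hx : 0 < x.re) {t : ℝ} (ht : 0 < t) :
    HasDerivAt (fun t : ℝ ↦ -x⁻¹ * Complex.log (1 + cexp (-(x * t)))) (cexp (x * t) + 1)⁻¹ t := by
  have hslit : 1 + cexp (-(x * t)) ∈ Complex.slitPlane := by
    refine Complex.mem_slitPlane_of_norm_lt_one ?_
    rw [norm_cexp_neg_mul_ofReal, Real.exp_lt_one_iff, neg_lt_zero]
    exact mul_pos hx ht
  have hlin : HasDerivAt (fun w : ℂ ↦ -(x * w)) (-x) t := (hasDerivAt_const_mul x).neg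
  refine (((hlin.cexp.const_add 1).clog hslit).const_mul (-x⁻¹)).comp_ofReal.congr_deriv ?_
  have hx0 : x ≠ 0 := Complex.ne_zero_of_re_pos hx
  rw [inv_cexp_add_one_eq_cexp_neg_mul]
  field_simp

lemma integral_inv_cexp_add_one {x : ℂ} (hx : 0 < x.re) :
    ∫ t in Ioi (0 : ℝ), (cexp (x * t) + 1)⁻¹ = Real.log 2 / x := by
  have hcont : ContinuousWithinAt
      (fun t : ℝ ↦ -x⁻¹ * Complex.log (1 + cexp (-(x * t)))) (Ici 0) 0 :=
    (continuousAt_const.mul (ContinuousAt.clog (by fun_prop) (by norm_num))).continuousWithinAt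
  have hlim : Tendsto (fun t : ℝ ↦ -x⁻¹ * Complex.log (1 + cexp (-(x * t)))) atTop (𝓝 0) := by
    simpa using
      (((tendsto_cexp_neg_mul_atTop hx).const_add 1).clog (by simp)).const_mul (-x⁻¹)
  rw [integral_Ioi_of_hasDerivAt_of_tendsto hcont
    (fun t ht ↦ hasDerivAt_log_one_add_cexp_neg_mul hx ht) (integrableOn_inv_cexp_add_one hx) hlim]
  rw [Complex.ofReal_zero, mul_zero, neg_zero, Complex.exp_zero, one_add_one_eq_two,
    ← Complex.ofReal_ofNat, ← Complex.ofReal_log zero_le_two, zero_sub, neg_mul, neg_neg,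
    inv_mul_eq_div]

lemma J1_integrand_eq (x : ℂ) {t : ℝ} (ht : 0 < t) :
    1 / ((1 + cexp (-t)) * (1 + cexp (x * t))) =
      2 * (binetKernel (2 * t) * (cexp (x * t) + 1)⁻¹) - binetKernel t * (cexp (x * t) + 1)⁻¹ +
        1 / 2 * (cexp (x * t) + 1)⁻¹ := by
  have hB := congrArg Complex.ofReal (two_mul_binetKernel_two_mul_sub ht)
  have ht' : cexp t + 1 ≠ 0 := cexp_add_one_ne_zero (z := t) ht
  have hlogistic : (1 + cexp (-t))⁻¹ = 1 - (cexp t + 1)⁻¹ := by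
    have := Complex.exp_ne_zero (t : ℂ)
    rw [Complex.exp_neg]
    field_simp
    ring
  push_cast at hB
  rw [one_div, mul_inv, hlogistic, add_comm 1 (cexp _)]
  linear_combination -(cexp (x * t) + 1)⁻¹ * hB

theorem J1_eq {x : ℂ} (hx : 0 < x.re) :
    J1 x = altLambertIntegral (x / 2) - altLambertIntegral x + 1 / 2 * (Real.log 2 / x) := by
  have hJ : J1 x = _ := setIntegral_congr_fun measurableSet_Ioi fun t ht ↦ J1_integrand_eq x ht
  have h2 := (integrableOn_binetKernel_two_mul_mul_inv_cexp_add_one hx).const_mul 2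
  have h1 := integrableOn_binetKernel_mul_inv_cexp_add_one hx
  have h0 := integrableOn_inv_cexp_add_one hx
  have h21 : IntegrableOn (fun t : ℝ ↦ 2 * (binetKernel (2 * t) * (cexp (x * t) + 1)⁻¹) -
      binetKernel t * (cexp (x * t) + 1)⁻¹) (Ioi 0) := h2.sub h1
  rw [hJ, integral_add h21 (h0.const_mul _), integral_sub h2 h1, integral_const_mul,
    integral_const_mul, integral_inv_cexp_add_one hx, altLambertIntegral_half, altLambertIntegral]

end FermiIntegral

theorem J1_in_terms_of_F1 (x : ℂ) (hx : 0 < x.re) :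
    J1 x + Real.log 2 =
      3 * F1 x - 2 * F1 (2 * x) - F1 (x / 2) + ((1 + x) / (2 * x)) * Real.log 2 := by
  have hx0 : x ≠ 0 := Complex.ne_zero_of_re_pos hx
  have hx2 : 0 < (x / 2).re := by simpa using hx
  have hF := F1_sub_two_mul_F1_two_mul hx
  have hF2 := F1_sub_two_mul_F1_two_mul hx2
  have hlog := log_two_pi_div_two_mul (div_ne_zero hx0 two_ne_zero)
  rw [mul_div_cancel₀ x two_ne_zero] at hF2 hlog
  have hlin : (1 + x) / (2 * x) * (Real.log 2 : ℂ) =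
      1 / 2 * (Real.log 2 / x) + 1 / 2 * Real.log 2 := by
    field_simp
  rw [J1_eq hx, hlin]
  linear_combination hF2 - hF + 1 / 2 * hlog
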